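/- Let L n be the number of lambda terms of size n and H n the number of head normal forms of size n. Then the density of head normal forms among plain lambda terms is ρ/(1 − ρ): the sequence n ↦ H n / L n converges to ρ/(1 − ρ) ≈ 0.41964 as n → ∞. -/

import Mathlib

/-- Lambda terms with de Bruijn indices. -/
inductive Term : Type
  | var : ℕ → Term
  | app : Term → Term → Term
  | abs : Term → Term

namespace Term

/-- Natural size: every operator (zero, successor, application, abstraction) has size 1. -/
def size : Term → ℕ
  | var k => k + 1
  | app M N => M.size + N.size + 1
  | abs M => M.size + 1

end Term

/-- `L n` is the number of lambda terms of size `n`. -/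
noncomputable def L (n : ℕ) : ℕ := Nat.card {t : Term // t.size = n}


/-- Neutral head normal forms: terms of the form `app (app … (app (var k) N₁) …) N_p`
with `p ≥ 0` and arbitrary terms `N₁, …, N_p`. -/
inductive IsNeutralHnf : Term → Prop
  | var (k : ℕ) : IsNeutralHnf (Term.var k)
  | app {m : Term} (n : Term) : IsNeutralHnf m → IsNeutralHnf (Term.app m n)

/-- `K n` is the number of neutral head normal forms of size `n`. -/
noncomputable def K (n : ℕ) : ℕ := Nat.card {t : Term // IsNeutralHnf t ∧ t.size = n}

/-- Head normal forms: terms of the form `abs (abs … (abs K) …)` (zero or more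
abstractions) where `K` is a neutral head normal form. -/
inductive IsHnf : Term → Prop
  | of_neutral {t : Term} : IsNeutralHnf t → IsHnf t
  | abs {t : Term} : IsHnf t → IsHnf (Term.abs t)

/-- `H n` is the number of head normal forms of size `n`. -/
noncomputable def H (n : ℕ) : ℕ := Nat.card {t : Term // IsHnf t ∧ t.size = n}

/-!
The generating function `F` of `L` satisfies a quadratic equation over `ℤ[X]`, hence a linear
differential equation, so that `L` satisfies a linear recurrence whose coefficients are affine in
the index. Divided by its leading terms, this recurrence turns the ratios `q n = L n / L (n + 1)`
into an asymptotically autonomous iteration: up to `O(1 / n)`,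
`1 / q (n + 3) = 4 - 2 * q (n + 2) - q n * q (n + 1) * q (n + 2)`.
Since `q ≤ 1 / 2`, the iteration contracts towards its fixed point `ρ`, and `q n` tends to `ρ`.

Raising the head variable of a term by one, or replacing its head abstraction `abs M` by
`app (var 0) M`, yields a neutral head normal form of size one larger, and every neutral head
normal form except `var 0` arises in this way exactly once. Therefore
`H (n + 1) = H n + L n` for `n ≥ 1`, and a Stolz–Cesàro argument gives the limit `ρ / (1 - ρ)`
of `H n / L n`.
-/

open Filter Finset Topology PowerSeries

section ContractiveRecurrence

variable {k : ℕ} {w e : ℕ → ℝ}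

theorem exists_forall_le_of_add_le_sum_mul_add {D : ℝ} (hw : ∀ i ∈ range k, 0 ≤ w i)
    (hw_sum : ∑ i ∈ range k, w i < 1) (he : ∀ n, 0 ≤ e n)
    (hrec : ∀ n, e (n + k) ≤ ∑ i ∈ range k, w i * e (n + i) + D) :
    ∃ B, ∀ n, e n ≤ B := by
  set θ := ∑ i ∈ range k, w i
  have hθ : 0 < 1 - θ := sub_pos.2 hw_sum
  set B := ∑ i ∈ range k, e i + |D| / (1 - θ)
  have hDB : |D| / (1 - θ) ≤ B := le_add_of_nonneg_left (sum_nonneg fun i _ => he i)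
  refine ⟨B, fun n => ?_⟩
  induction n using Nat.strong_induction_on with
  | _ n ih =>
    obtain hnk | hkn := lt_or_ge n k
    · calc e n ≤ ∑ i ∈ range k, e i :=
            single_le_sum (f := e) (fun i _ => he i) (mem_range.2 hnk)
        _ ≤ B := le_add_of_nonneg_right (by positivity)
    · obtain ⟨m, rfl⟩ := Nat.exists_eq_add_of_le' hkn
      calc e (m + k) ≤ ∑ i ∈ range k, w i * e (m + i) + D := hrec m
        _ ≤ ∑ i ∈ range k, w i * B + |D| := by
            gcongr with i hi
            · exact hw i hi
            · exact ih _ (Nat.add_lt_add_left (mem_range.1 hi) m)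
            · exact le_abs_self D
        _ ≤ θ * B + (1 - θ) * B := by
            rw [← sum_mul]
            gcongr
            exact (div_le_iff₀' hθ).1 hDB
        _ = B := by ring

theorem isBoundedUnder_of_add_le_sum_mul_add {D : ℝ} (hw : ∀ i ∈ range k, 0 ≤ w i)
    (hw_sum : ∑ i ∈ range k, w i < 1) (he : ∀ n, 0 ≤ e n)
    (hrec : ∀ᶠ n in atTop, e (n + k) ≤ ∑ i ∈ range k, w i * e (n + i) + D) :
    IsBoundedUnder (· ≤ ·) atTop e := by
  obtain ⟨N, hN⟩ := eventually_atTop.1 hrec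
  obtain ⟨B, hB⟩ := exists_forall_le_of_add_le_sum_mul_add (e := fun n => e (n + N)) (D := D)
    hw hw_sum (fun n => he _)
    fun n => by simpa only [add_right_comm n _ N] using hN (n + N) (Nat.le_add_left N n)
  refine isBoundedUnder_of_eventually_le (a := B) ?_
  filter_upwards [eventually_ge_atTop N] with n hn
  simpa only [Nat.sub_add_cancel hn] using hB (n - N)

theorem tendsto_zero_of_add_le_sum_mul_add {δ : ℕ → ℝ} (hw : ∀ i ∈ range k, 0 ≤ w i)
    (hw_sum : ∑ i ∈ range k, w i < 1) (he : ∀ n, 0 ≤ e n) (hδ : Tendsto δ atTop (𝓝 0))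
    (hrec : ∀ᶠ n in atTop, e (n + k) ≤ ∑ i ∈ range k, w i * e (n + i) + δ n) :
    Tendsto e atTop (𝓝 0) := by
  set θ := ∑ i ∈ range k, w i
  have hbelow : IsBoundedUnder (· ≥ ·) atTop e := isBoundedUnder_of_eventually_ge (.of_forall he)
  have habove : IsBoundedUnder (· ≤ ·) atTop e := by
    refine isBoundedUnder_of_add_le_sum_mul_add (D := 1) hw hw_sum he ?_
    filter_upwards [hrec, hδ.eventually_le_const zero_lt_one] with n hn hδn
    exact hn.trans (by gcongr)
  set ℓ := limsup e atTop
  have hcontract (ε : ℝ) (hε : 0 < ε) : ℓ ≤ θ * (ℓ + ε) + ε := by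
    obtain ⟨N, hN⟩ := eventually_atTop.1
      (eventually_lt_of_limsup_lt (lt_add_of_pos_right ℓ hε) habove)
    have hstep : ∀ᶠ n in atTop, e (n + k) ≤ θ * (ℓ + ε) + ε := by
      filter_upwards [hrec, hδ.eventually_le_const hε, eventually_ge_atTop N] with n hn hδn hNn
      calc e (n + k) ≤ ∑ i ∈ range k, w i * e (n + i) + δ n := hn
        _ ≤ ∑ i ∈ range k, w i * (ℓ + ε) + ε := by
            gcongr with i hi
            · exact hw i hi
            · exact (hN _ (Nat.le_add_right_of_le hNn)).le
        _ = θ * (ℓ + ε) + ε := by rw [← sum_mul]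
    exact limsup_le_of_le hbelow.isCoboundedUnder_le
      (by rwa [← map_add_atTop_eq_nat k, eventually_map])
  have hℓ : ℓ ≤ 0 := by
    by_contra! hpos
    have hgap : 0 < (1 - θ) * ℓ := mul_pos (sub_pos.2 hw_sum) hpos
    nlinarith [hcontract ((1 - θ) * ℓ / 4) (by positivity)]
  exact tendsto_of_le_liminf_of_limsup_le
    (le_liminf_of_le habove.isCoboundedUnder_ge (.of_forall he)) hℓ habove hbelow

end ContractiveRecurrence

theorem tendsto_div_of_succ_eq_add {a b : ℕ → ℝ} {r : ℝ} (ha : ∀ n, a n ≠ 0) (hr : |r| < 1)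
    (ha_ratio : Tendsto (fun n => a n / a (n + 1)) atTop (𝓝 r))
    (hb : ∀ n, b (n + 1) = b n + a n) :
    Tendsto (fun n => b n / a n) atTop (𝓝 (r / (1 - r))) := by
  have hr1 : 1 - r ≠ 0 := by linarith [le_abs_self r]
  obtain ⟨θ, hrθ, hθ⟩ := exists_between hr
  have herror : Tendsto (fun n => |a n / a (n + 1) - r| * |r / (1 - r) + 1|) atTop (𝓝 0) := by
    simpa using (ha_ratio.sub_const r).abs.mul_const |r / (1 - r) + 1|
  rw [tendsto_iff_dist_tendsto_zero]
  refine tendsto_zero_of_add_le_sum_mul_add (k := 1) (w := fun _ => θ)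
    (fun _ _ => (abs_nonneg r).trans hrθ.le) (by simpa using hθ) (fun _ => dist_nonneg) herror ?_
  filter_upwards [ha_ratio.abs.eventually_le_const hrθ] with n hn
  have hstep : b (n + 1) / a (n + 1) - r / (1 - r) =
      a n / a (n + 1) * (b n / a n - r / (1 - r)) +
        (a n / a (n + 1) - r) * (r / (1 - r) + 1) := by
    have := ha n
    have := ha (n + 1)
    rw [hb]
    field_simp
    ring
  simp only [sum_range_one, add_zero, Real.dist_eq]
  rw [hstep, ← abs_mul]
  refine (abs_add_le _ _).trans (add_le_add_left ?_ _)
  rw [abs_mul]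
  gcongr

theorem coeff_X_mul_derivative {R : Type*} [CommSemiring R] (F : R⟦X⟧) (n : ℕ) :
    coeff n (X * d⁄dX R F) = n * coeff n F := by
  cases n with
  | zero => simp
  | succ n => rw [coeff_succ_X_mul, coeff_derivative, mul_comm]; norm_cast

section QuadraticSeries

variable {R : Type*} [CommRing R] {F : R⟦X⟧}

-- `1 - X - 2 * X * F` is a square root of a rational function, so its logarithmic derivative is
-- rational; clearing denominators gives the equation.
theorem linear_ode_of_quadratic (hF : (1 - X) * X * F ^ 2 - (1 - X) ^ 2 * F + X = 0) :
    (1 - 3 * X + 3 * X ^ 2 + X ^ 3) * F + (1 - 4 * X + 2 * X ^ 2 + X ^ 4) * (X * d⁄dX R F) =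
      2 * X - X ^ 2 - X ^ 3 := by
  have hderiv : (1 - X) * X * (2 * F * d⁄dX R F) + (1 - 2 * X) * F ^ 2
      - ((1 - X) ^ 2 * d⁄dX R F - 2 * (1 - X) * F) + 1 = 0 := by
    rw [← map_zero (d⁄dX R), ← hF]
    simp only [map_add, map_sub, Derivation.leibniz, Derivation.leibniz_pow, derivative_X,
      Derivation.map_one_eq_zero, smul_eq_mul, nsmul_eq_mul]
    push_cast
    ring
  linear_combination
    (2 * X * (1 - X) * (-1 - 2 * F - 2 * X * d⁄dX R F) - (1 - X - 2 * X * F)) * hF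
      - (1 - X - 2 * X * F) * (1 - X) * X * hderiv

theorem coeff_recurrence_of_quadratic
    (hF : (1 - X) * X * F ^ 2 - (1 - X) ^ 2 * F + X = 0) (n : ℕ) :
    (n + 5) * coeff (n + 4) F = (4 * n + 15) * coeff (n + 3) F - (2 * n + 7) * coeff (n + 2) F
      - coeff (n + 1) F - n * coeff n F := by
  obtain ⟨G, hG⟩ : ∃ G, G = X * d⁄dX R F := ⟨_, rfl⟩
  have hcoeffG (m : ℕ) : coeff m G = m * coeff m F := by rw [hG, coeff_X_mul_derivative]
  have hode : F - 3 • (X ^ 1 * F) + 3 • (X ^ 2 * F) + X ^ 3 * F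
      + G - 4 • (X ^ 1 * G) + 2 • (X ^ 2 * G) + X ^ 4 * G = 2 • X ^ 1 - X ^ 2 - X ^ 3 := by
    rw [hG]
    linear_combination linear_ode_of_quadratic hF
  have hcoeff := congrArg (coeff (n + 4)) hode
  simp only [map_add, map_sub, map_nsmul, coeff_X_pow_mul', hcoeffG, coeff_X_pow] at hcoeff
  simp only [le_add_iff_nonneg_left, zero_le, ↓reduceIte, Nat.add_one_sub_one, nsmul_eq_mul,
    Nat.cast_ofNat, Nat.reduceSubDiff, Nat.cast_add, add_tsub_cancel_right,
    Nat.reduceEqDiff] at hcoeff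
  linear_combination hcoeff

end QuadraticSeries

/-- Pairs of total weight `n`, sorted by the weights of their two components. -/
def sigmaAntidiagonalEquiv {α β : Type*} (f : α → ℕ) (g : β → ℕ) (n : ℕ) :
    {p : α × β // f p.1 + g p.2 = n} ≃
      Σ q : antidiagonal n, {a // f a = q.1.1} × {b // g b = q.1.2} where
  toFun p := ⟨⟨(f p.1.1, g p.1.2), mem_antidiagonal.2 p.2⟩, ⟨p.1.1, rfl⟩, ⟨p.1.2, rfl⟩⟩
  invFun x := ⟨(x.2.1, x.2.2), by
    rw [x.2.1.2, x.2.2.2]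
    exact mem_antidiagonal.1 x.1.2⟩
  left_inv _ := rfl
  right_inv := by
    rintro ⟨⟨⟨i, j⟩, hij⟩, ⟨a, ha⟩, ⟨b, hb⟩⟩
    obtain rfl : f a = i := ha
    obtain rfl : g b = j := hb
    rfl

theorem card_add_eq_sum_antidiagonal {α β : Type*} (f : α → ℕ) (g : β → ℕ)
    [∀ n, Finite {a // f a = n}] [∀ n, Finite {b // g b = n}] (n : ℕ) :
    Nat.card {p : α × β // f p.1 + g p.2 = n} =
      ∑ q ∈ antidiagonal n, Nat.card {a // f a = q.1} * Nat.card {b // g b = q.2} := by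
  rw [Nat.card_congr (sigmaAntidiagonalEquiv f g n), Nat.card_sigma]
  simp only [Nat.card_prod]
  exact sum_coe_sort (antidiagonal n)
    fun q => Nat.card {a // f a = q.1} * Nat.card {b // g b = q.2}

namespace Term

/-- The three ways of building a term of size `n + 1`: the variable `var n`, an abstraction, or
an application. -/
def succEquiv (n : ℕ) : {t : Term // t.size = n + 1} ≃
    Unit ⊕ {t : Term // t.size = n} ⊕ {p : Term × Term // p.1.size + p.2.size = n} where
  toFun
    | ⟨var _, _⟩ => .inl ()
    | ⟨abs M, h⟩ => .inr (.inl ⟨M, Nat.succ.inj h⟩)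
    | ⟨app M N, h⟩ => .inr (.inr ⟨(M, N), Nat.succ.inj h⟩)
  invFun
    | .inl () => ⟨var n, rfl⟩
    | .inr (.inl ⟨M, h⟩) => ⟨abs M, congrArg Nat.succ h⟩
    | .inr (.inr ⟨(M, N), h⟩) => ⟨app M N, congrArg Nat.succ h⟩
  left_inv := by
    rintro ⟨_ | _ | _, h⟩
    · obtain rfl := Nat.succ.inj h
      rfl
    · rfl
    · rfl
  right_inv := by rintro (_ | _ | _) <;> rfl

theorem size_pos (t : Term) : 0 < t.size := by
  cases t <;> exact Nat.succ_pos _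

instance isEmpty_size_eq_zero : IsEmpty {t : Term // t.size = 0} :=
  ⟨fun t => t.1.size_pos.ne' t.2⟩

instance finite_size_eq (n : ℕ) : Finite {t : Term // t.size = n} := by
  induction n using Nat.strong_induction_on with
  | _ n ih =>
    cases n with
    | zero => infer_instance
    | succ n =>
      have := ih n n.lt_succ_self
      have hpair (q : antidiagonal n) :
          Finite ({M : Term // M.size = q.1.1} × {N : Term // N.size = q.1.2}) := by
        have := ih _ (Nat.lt_succ_of_le (HasAntidiagonal.antidiagonal.fst_le q.2))
        have := ih _ (Nat.lt_succ_of_le (HasAntidiagonal.antidiagonal.snd_le q.2))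
        infer_instance
      have := Finite.of_equiv _ (sigmaAntidiagonalEquiv size size n).symm
      exact Finite.of_equiv _ (succEquiv n).symm

/-- The neutral head normal form obtained by pushing one size unit to the head of a term: along
the spine of applications, a head variable is raised by one and a head abstraction `abs M` becomes
`app (var 0) M`. -/
def toNeutral : Term → Term
  | var k => var (k + 1)
  | app M N => app M.toNeutral N
  | abs M => app (var 0) M

theorem size_toNeutral (t : Term) : t.toNeutral.size = t.size + 1 := by
  induction t with simp only [toNeutral, size] <;> omega

theorem isNeutralHnf_toNeutral (t : Term) : IsNeutralHnf t.toNeutral := by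
  induction t with
  | var k => exact .var _
  | app M N ih => exact .app N ih
  | abs M => exact .app M (.var 0)

theorem toNeutral_ne_var_zero (t : Term) : t.toNeutral ≠ var 0 := by
  cases t <;> simp [toNeutral]

theorem toNeutral_injective : Function.Injective toNeutral := by
  intro s t h
  induction s generalizing t with
  | app M N ihM =>
    cases t with simp only [toNeutral, app.injEq, reduceCtorEq] at h
    | app M' N' => rw [ihM h.1, h.2]
    | abs M' => exact absurd h.1 (toNeutral_ne_var_zero M)
  | _ => cases t <;> simp_all [toNeutral, (toNeutral_ne_var_zero _).symm]

theorem exists_toNeutral_eq {t : Term} (ht : IsNeutralHnf t) (hne : t ≠ var 0) :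
    ∃ s, toNeutral s = t := by
  induction ht with
  | var k =>
    cases k with
    | zero => exact absurd rfl hne
    | succ k => exact ⟨var k, rfl⟩
  | @app M N _ ih =>
    by_cases hM : M = var 0
    · exact ⟨abs N, by rw [hM, toNeutral]⟩
    · obtain ⟨s, rfl⟩ := ih hM
      exact ⟨app s N, rfl⟩

end Term

open Term

theorem L_zero : L 0 = 0 :=
  Nat.card_of_isEmpty

theorem L_succ (n : ℕ) : L (n + 1) = 1 + L n + ∑ p ∈ antidiagonal n, L p.1 * L p.2 := by
  have := Finite.of_equiv _ (sigmaAntidiagonalEquiv size size n).symm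
  rw [L, Nat.card_congr (succEquiv n), Nat.card_sum, Nat.card_sum,
    card_add_eq_sum_antidiagonal size size n, Nat.card_unique, add_assoc]
  rfl

theorem L_add_one_le_L_succ (n : ℕ) : L n + 1 ≤ L (n + 1) := by
  rw [L_succ, add_comm (L n)]
  exact Nat.le_add_right _ _

theorem L_succ_pos (n : ℕ) : 0 < L (n + 1) :=
  (Nat.succ_pos _).trans_le (L_add_one_le_L_succ n)

theorem two_mul_L_succ_le (n : ℕ) : 2 * L (n + 1) ≤ L (n + 2) := by
  have hconv : L n + ∑ p ∈ antidiagonal n, L p.1 * L p.2 ≤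
      ∑ p ∈ antidiagonal (n + 1), L p.1 * L p.2 := by
    have hsingle : L n ≤ ∑ p ∈ antidiagonal n, L p.2 :=
      single_le_sum (f := fun p : ℕ × ℕ => L p.2) (fun _ _ => Nat.zero_le _)
        (show (0, n) ∈ antidiagonal n from mem_antidiagonal.2 (zero_add n))
    calc L n + ∑ p ∈ antidiagonal n, L p.1 * L p.2
        ≤ ∑ p ∈ antidiagonal n, (L p.1 + 1) * L p.2 := by
          simp only [add_one_mul, sum_add_distrib]
          linarith
      _ ≤ ∑ p ∈ antidiagonal n, L (p.1 + 1) * L p.2 := by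
          gcongr
          exact L_add_one_le_L_succ _
      _ ≤ ∑ p ∈ antidiagonal (n + 1), L p.1 * L p.2 := by
          rw [Nat.sum_antidiagonal_succ]
          exact Nat.le_add_left _ _
  rw [L_succ (n + 1)]
  linarith [L_succ n]

theorem K_add_two (n : ℕ) : K (n + 2) = L (n + 1) := by
  have himage : {t : Term | IsNeutralHnf t ∧ t.size = n + 2} =
      toNeutral '' {t : Term | t.size = n + 1} := by
    ext t
    constructor
    · rintro ⟨ht, hsize⟩
      obtain ⟨s, rfl⟩ := exists_toNeutral_eq ht (by rintro rfl; simp [size] at hsize)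
      exact ⟨s, Nat.succ.inj (s.size_toNeutral.symm.trans hsize), rfl⟩
    · rintro ⟨s, hs, rfl⟩
      exact ⟨s.isNeutralHnf_toNeutral, s.size_toNeutral.trans (congrArg Nat.succ hs)⟩
  calc K (n + 2) = {t : Term | IsNeutralHnf t ∧ t.size = n + 2}.ncard := rfl
    _ = L (n + 1) := by rw [himage, Set.ncard_image_of_injective _ toNeutral_injective]; rfl

theorem H_succ_eq_K_succ_add (n : ℕ) : H (n + 1) = K (n + 1) + H n := by
  have hsplit : {t : Term | IsHnf t ∧ t.size = n + 1} =
      {t | IsNeutralHnf t ∧ t.size = n + 1} ∪ abs '' {t | IsHnf t ∧ t.size = n} := by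
    ext t
    constructor
    · rintro ⟨ht | ht, hsize⟩
      · exact .inl ⟨ht, hsize⟩
      · exact .inr ⟨_, ⟨ht, Nat.succ.inj hsize⟩, rfl⟩
    · rintro (⟨ht, hsize⟩ | ⟨s, ⟨hs, hsize⟩, rfl⟩)
      · exact ⟨.of_neutral ht, hsize⟩
      · exact ⟨.abs hs, congrArg Nat.succ hsize⟩
  have hdisj : Disjoint {t | IsNeutralHnf t ∧ t.size = n + 1}
      (abs '' {t | IsHnf t ∧ t.size = n}) := by
    rw [Set.disjoint_left]
    rintro _ ⟨ht, _⟩ ⟨s, _, rfl⟩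
    cases ht
  have hfin (P : Term → Prop) (m : ℕ) : {t | P t ∧ t.size = m}.Finite :=
    (Set.finite_coe_iff.1 (finite_size_eq m)).subset fun _ ht => ht.2
  calc H (n + 1) = {t : Term | IsHnf t ∧ t.size = n + 1}.ncard := rfl
    _ = K (n + 1) + H n := by
      rw [hsplit, Set.ncard_union_eq hdisj (hfin _ _) ((hfin _ _).image _),
        Set.ncard_image_of_injective _ fun _ _ => abs.inj]
      rfl

theorem H_add_two (n : ℕ) : H (n + 2) = H (n + 1) + L (n + 1) := by
  rw [H_succ_eq_K_succ_add, K_add_two, add_comm]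

/-- The ordinary generating function of lambda terms counted by size. -/
noncomputable def termSeries : ℝ⟦X⟧ := .mk fun n => (L n : ℝ)

theorem termSeries_eq : termSeries = X * (.mk 1 + termSeries + termSeries ^ 2) := by
  ext n
  cases n with
  | zero => simp [termSeries, L_zero]
  | succ n => rw [coeff_succ_X_mul]; simp [termSeries, sq, coeff_mul, L_succ]

theorem quadratic_termSeries :
    (1 - X) * X * termSeries ^ 2 - (1 - X) ^ 2 * termSeries + X = 0 := by
  linear_combination -(1 - X) * termSeries_eq - X * mk_one_mul_one_sub_eq_one ℝ

theorem L_recurrence (n : ℕ) :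
    ((n : ℝ) + 5) * L (n + 4) =
      (4 * n + 15) * L (n + 3) - (2 * n + 7) * L (n + 2) - L (n + 1) - n * L n := by
  simpa [termSeries] using coeff_recurrence_of_quadratic quadratic_termSeries n

/-- The ratio of consecutive term counts; its limit is the radius of convergence of `termSeries`. -/
noncomputable def termRatio (n : ℕ) : ℝ := L n / L (n + 1)

theorem termRatio_nonneg (n : ℕ) : 0 ≤ termRatio n := by
  unfold termRatio
  positivity

theorem termRatio_le_half (n : ℕ) : termRatio n ≤ 1 / 2 := by
  cases n with
  | zero => simp [termRatio, L_zero]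
  | succ n =>
    have hpos : (0 : ℝ) < L (n + 2) := by exact_mod_cast L_succ_pos (n + 1)
    have hle : (2 : ℝ) * L (n + 1) ≤ L (n + 2) := by exact_mod_cast two_mul_L_succ_le n
    rw [termRatio, div_le_iff₀ hpos]
    linarith

theorem termRatio_recurrence (n : ℕ) :
    (n : ℝ) + 5 = termRatio (n + 3) * (4 * n + 15 - (2 * n + 7) * termRatio (n + 2)
      - termRatio (n + 1) * termRatio (n + 2)
      - n * (termRatio n * termRatio (n + 1) * termRatio (n + 2))) := by
  have hL (m : ℕ) : (L (m + 1) : ℝ) ≠ 0 := by exact_mod_cast (L_succ_pos m).ne'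
  have h1 := hL n
  have h2 := hL (n + 1)
  have h3 := hL (n + 2)
  have h4 := hL (n + 3)
  simp only [termRatio, add_assoc, Nat.reduceAdd] at *
  field_simp
  linear_combination L_recurrence n

/-- The numerator of the `O(1 / n)` term by which the ratios deviate from the limiting iteration. -/
noncomputable def termRatioError (n : ℕ) : ℝ :=
  5 - 3 * termRatio (n + 2) + termRatio (n + 1) * termRatio (n + 2)
    - 5 * (termRatio n * termRatio (n + 1) * termRatio (n + 2))

theorem abs_termRatioError_le (n : ℕ) : |termRatioError n| ≤ 6 := by
  have hnonneg := termRatio_nonneg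
  have hhalf := termRatio_le_half
  have hpair_nonneg := mul_nonneg (hnonneg (n + 1)) (hnonneg (n + 2))
  have hpair : termRatio (n + 1) * termRatio (n + 2) ≤ 1 / 2 * (1 / 2) :=
    mul_le_mul (hhalf _) (hhalf _) (hnonneg _) (by norm_num)
  have htriple_nonneg := mul_nonneg (mul_nonneg (hnonneg n) (hnonneg (n + 1))) (hnonneg (n + 2))
  have htriple : termRatio n * termRatio (n + 1) * termRatio (n + 2) ≤ 1 / 2 * (1 / 2) * (1 / 2) :=
    mul_le_mul (mul_le_mul (hhalf _) (hhalf _) (hnonneg _) (by norm_num)) (hhalf _) (hnonneg _)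
      (by norm_num)
  rw [termRatioError, abs_le]
  constructor <;> linarith [hnonneg (n + 2), hhalf (n + 2)]

theorem le_three_tenths_of_root {ρ : ℝ} (hroot : ρ ^ 3 + ρ ^ 2 + 3 * ρ - 1 = 0) :
    ρ ≤ 3 / 10 := by
  by_contra! hlt
  nlinarith [pow_pos (show 0 < ρ by linarith) 3]

theorem one_eq_mul_four_sub {ρ : ℝ} (hroot : ρ ^ 3 + ρ ^ 2 + 3 * ρ - 1 = 0) :
    1 = ρ * (4 - 2 * ρ - ρ ^ 3) := by
  linear_combination (ρ - 1) * hroot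

theorem termRatio_add_three_sub {ρ : ℝ} (hroot : ρ ^ 3 + ρ ^ 2 + 3 * ρ - 1 = 0) (n : ℕ) :
    termRatio (n + 3) - ρ = ρ * termRatio (n + 3) *
      (termRatio (n + 1) * termRatio (n + 2) * (termRatio n - ρ)
        + ρ * termRatio (n + 2) * (termRatio (n + 1) - ρ)
        + (2 + ρ ^ 2) * (termRatio (n + 2) - ρ)
        + termRatioError n / (n + 5)) := by
  have hn : (n : ℝ) + 5 ≠ 0 := by positivity
  unfold termRatioError
  field_simp
  linear_combination (-ρ) * termRatio_recurrence n +
    (n + 5) * termRatio (n + 3) * one_eq_mul_four_sub hroot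

theorem dist_termRatio_add_three_le {ρ : ℝ} (hρ : 0 < ρ)
    (hroot : ρ ^ 3 + ρ ^ 2 + 3 * ρ - 1 = 0) (n : ℕ) :
    dist (termRatio (n + 3)) ρ ≤ 8 / 25 * dist (termRatio n) ρ
      + 8 / 25 * dist (termRatio (n + 1)) ρ + 8 / 25 * dist (termRatio (n + 2)) ρ
      + 1 / ((n : ℝ) + 5) := by
  have hρ_le := le_three_tenths_of_root hroot
  have hnonneg := termRatio_nonneg
  have hhalf := termRatio_le_half
  have hpair : termRatio (n + 1) * termRatio (n + 2) ≤ 1 / 2 * (1 / 2) :=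
    mul_le_mul (hhalf _) (hhalf _) (hnonneg _) (by norm_num)
  have hfactor : ρ * termRatio (n + 3) ≤ 3 / 10 * (1 / 2) :=
    mul_le_mul hρ_le (hhalf _) (hnonneg _) (by norm_num)
  have herror := abs_termRatioError_le n
  simp only [Real.dist_eq]
  rw [termRatio_add_three_sub hroot, abs_mul, abs_of_nonneg (mul_nonneg hρ.le (hnonneg _))]
  calc _ ≤ 3 / 10 * (1 / 2) * (1 / 2 * (1 / 2) * |termRatio n - ρ|
        + 3 / 10 * (1 / 2) * |termRatio (n + 1) - ρ|
        + (2 + (3 / 10) ^ 2) * |termRatio (n + 2) - ρ| + 6 / (n + 5)) := by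
        gcongr
        refine (abs_add_le _ _).trans (add_le_add ((abs_add_three _ _ _).trans ?_) ?_)
        · simp only [abs_mul, abs_of_nonneg (hnonneg _), abs_of_pos hρ]
          rw [abs_of_pos (by positivity : 0 < 2 + ρ ^ 2)]
          gcongr
          exacts [hnonneg _, hhalf _]
        · rw [abs_div, abs_of_pos (by positivity : (0 : ℝ) < n + 5)]
          gcongr
    _ ≤ _ := by
        have : 0 ≤ 1 / ((n : ℝ) + 5) := by positivity
        rw [show 6 / ((n : ℝ) + 5) = 6 * (1 / (n + 5)) by ring]
        linarith [abs_nonneg (termRatio n - ρ), abs_nonneg (termRatio (n + 1) - ρ),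
          abs_nonneg (termRatio (n + 2) - ρ)]

theorem tendsto_termRatio {ρ : ℝ} (hρ : 0 < ρ) (hroot : ρ ^ 3 + ρ ^ 2 + 3 * ρ - 1 = 0) :
    Tendsto termRatio atTop (𝓝 ρ) := by
  have herror : Tendsto (fun n : ℕ => 1 / ((n : ℝ) + 5)) atTop (𝓝 0) := by
    exact_mod_cast (tendsto_add_atTop_iff_nat 5).2 (tendsto_one_div_atTop_nhds_zero_nat (𝕜 := ℝ))
  rw [tendsto_iff_dist_tendsto_zero]
  refine tendsto_zero_of_add_le_sum_mul_add (k := 3) (w := fun _ => 8 / 25)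
    (fun _ _ => by norm_num) (by norm_num) (fun _ => dist_nonneg) herror (.of_forall fun n => ?_)
  simpa [sum_range_succ] using dist_termRatio_add_three_le hρ hroot n

theorem density_hnf (ρ : ℝ)
    (hρ_mem : ρ ∈ Set.Ioo (0 : ℝ) 1)
    (hρ_root : ρ ^ 3 + ρ ^ 2 + 3 * ρ - 1 = 0) :
    Filter.Tendsto (fun n : ℕ => (H n : ℝ) / (L n : ℝ)) Filter.atTop
      (nhds (ρ / (1 - ρ))) := by
  have hratio : Tendsto (fun n => (L (n + 1) : ℝ) / L (n + 2)) atTop (𝓝 ρ) :=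
    (tendsto_add_atTop_iff_nat 1).2 (tendsto_termRatio hρ_mem.1 hρ_root)
  have hshift : Tendsto (fun n => (H (n + 1) : ℝ) / L (n + 1)) atTop (𝓝 (ρ / (1 - ρ))) :=
    tendsto_div_of_succ_eq_add (fun n => by exact_mod_cast (L_succ_pos n).ne')
      (by rw [abs_of_pos hρ_mem.1]; exact hρ_mem.2) hratio
      (fun n => by exact_mod_cast H_add_two n)
  exact (tendsto_add_atTop_iff_nat 1).1 hshift
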